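/- arXiv:2206.02154 — 2 statements merged into one kernel-verified Lean document; each statement's English description precedes it below -/
import Mathlib

section
/- First fundamental theorem of FC for the general fractional derivative of Riemann–Liouville type: let (κ, k) ∈ L₁ and f ∈ C_{-1}(0,∞). Then for every t > 0 the function s ↦ (k * (κ * f))(s) is differentiable at t and its derivative equals f(t); that is, (D_{(k)} I_{(κ)} f)(t) = f(t) for all t > 0, so D_{(k)} is a left inverse operator to I_{(κ)} on C_{-1}(0,∞). -/
open Real Filter MeasureTheory intervalIntegral

/-- The Laplace convolution `(f * g)(t) = ∫_0^t f(t-τ) g(τ) dτ`. -/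
noncomputable def lconv (f g : ℝ → ℝ) : ℝ → ℝ :=
  fun t => ∫ τ in (0:ℝ)..t, f (t - τ) * g τ

/-- The space `C_{-1}(0,∞)`: functions representable as `t^p f₁(t)` with `p > -1`
and `f₁` continuous on `[0,∞)`. -/
def CMinusOne (f : ℝ → ℝ) : Prop :=
  ∃ p : ℝ, p > -1 ∧ ∃ f₁ : ℝ → ℝ, ContinuousOn f₁ (Set.Ici 0) ∧
    ∀ t > (0:ℝ), f t = t ^ p * f₁ t


/-- The class `L₁` of Sonin kernel pairs: `κ, k ∈ C_{-1}(0,∞)` with `(κ * k)(t) = 1`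
for all `t > 0`. -/
def SoninPair (κ k : ℝ → ℝ) : Prop :=
  CMinusOne κ ∧ CMinusOne k ∧ ∀ t > (0:ℝ), lconv κ k t = 1


noncomputable def posPow (p : ℝ) : ℝ → ℝ := (Set.Ioi (0:ℝ)).indicator (fun t => t ^ p)

lemma posPow_nonneg (p t : ℝ) : 0 ≤ posPow p t := by
  unfold posPow
  apply Set.indicator_nonneg
  intro x hx
  exact Real.rpow_nonneg (le_of_lt hx) p

lemma beta_unit {p q : ℝ} (hp : -1 < p) (hq : -1 < q) :
    IntervalIntegrable (fun t : ℝ => t ^ p * (1 - t) ^ q) volume 0 1 := by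
  have h := (Complex.betaIntegral_convergent (u := ((p + 1 : ℝ) : ℂ)) (v := ((q + 1 : ℝ) : ℂ))
    (by simp only [Complex.ofReal_re]; linarith) (by simp only [Complex.ofReal_re]; linarith)).norm
  refine h.congr_uIoo ?_
  intro t ht
  rw [Set.uIoo_of_le zero_le_one] at ht
  obtain ⟨h0, h1⟩ := ht
  have e1 : (((p + 1 : ℝ) : ℂ) - 1) = ((p : ℝ) : ℂ) := by push_cast; ring
  have e2 : (((q + 1 : ℝ) : ℂ) - 1) = ((q : ℝ) : ℂ) := by push_cast; ring
  have e3 : (1 - (t : ℂ)) = ((1 - t : ℝ) : ℂ) := by push_cast; ring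
  simp only [e1, e2, e3, norm_mul]
  rw [Complex.norm_cpow_eq_rpow_re_of_pos h0, Complex.norm_cpow_eq_rpow_re_of_pos (by linarith)]
  simp

lemma beta_scale_id {p q x t : ℝ} (hx : 0 < x) (h0 : 0 ≤ t) (h1 : t ≤ x) :
    x ^ (p + q) * ((1 / x * t) ^ p * (1 - 1 / x * t) ^ q) = t ^ p * (x - t) ^ q := by
  have e : x - t = x * (1 - 1 / x * t) := by field_simp
  have e' : t = x * (1 / x * t) := by field_simp
  have n1 : 0 ≤ 1 / x * t := by positivity
  have n2 : 0 ≤ 1 - 1 / x * t := by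
    have : 1 / x * t ≤ 1 := by
      rw [one_div, inv_mul_le_iff₀ hx]; linarith
    linarith
  rw [e, Real.mul_rpow hx.le n2]
  conv_rhs => rw [e', ← e']
  have : t ^ p = x ^ p * (1 / x * t) ^ p := by
    rw [← Real.mul_rpow hx.le n1, ← e']
  rw [this, Real.rpow_add hx]; ring

lemma beta_scaled {p q x : ℝ} (hp : -1 < p) (hq : -1 < q) (hx : 0 < x) :
    IntervalIntegrable (fun t : ℝ => t ^ p * (x - t) ^ q) volume 0 x := by
  have h := ((beta_unit hp hq).comp_mul_left (c := 1 / x)).const_mul (x ^ (p + q))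
  simp only [zero_div, one_div_one_div] at h
  refine h.congr ?_
  intro t ht
  rw [Set.uIoc_of_le hx.le] at ht
  exact beta_scale_id hx ht.1.le ht.2

lemma beta_scaled_val {p q x : ℝ} (hx : 0 < x) :
    ∫ t in (0:ℝ)..x, t ^ p * (x - t) ^ q
      = (∫ t in (0:ℝ)..1, t ^ p * (1 - t) ^ q) * x ^ (p + q + 1) := by
  have h : ∫ t in (0:ℝ)..x, t ^ p * (x - t) ^ q
      = ∫ t in (0:ℝ)..x, x ^ (p + q) * ((1 / x * t) ^ p * (1 - 1 / x * t) ^ q) := by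
    apply intervalIntegral.integral_congr
    intro t ht
    rw [Set.uIcc_of_le hx.le] at ht
    exact (beta_scale_id hx ht.1 ht.2).symm
  rw [h, intervalIntegral.integral_const_mul,
    intervalIntegral.integral_comp_mul_left (fun t => t ^ p * (1 - t) ^ q) (by positivity)]
  have : 1 / x * x = 1 := by field_simp
  rw [this, Real.rpow_add_one hx.ne']
  simp
  ring

lemma posPow_mul_eq {p q x : ℝ} (hx : 0 < x) :
    (fun t => posPow p t * posPow q (x - t))
      = (Set.Ioo 0 x).indicator (fun t => t ^ p * (x - t) ^ q) := by
  ext t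
  unfold posPow
  by_cases h0 : 0 < t <;> by_cases h1 : t < x <;> simp [Set.indicator, h0, h1]

lemma posPow_mul_eq_zero {p q x : ℝ} (hx : x ≤ 0) :
    (fun t => posPow p t * posPow q (x - t)) = 0 := by
  ext t
  unfold posPow
  by_cases h0 : 0 < t
  · have : ¬ (t < x) := by linarith
    simp [Set.indicator, this]
  · simp [Set.indicator, h0]

lemma posPow_conv_int {p q : ℝ} (hp : -1 < p) (hq : -1 < q) (x : ℝ) :
    Integrable (fun t => posPow p t * posPow q (x - t)) := by
  rcases le_or_gt x 0 with hx | hx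
  · rw [posPow_mul_eq_zero hx]; exact integrable_zero _ _ _
  · rw [posPow_mul_eq hx, integrable_indicator_iff measurableSet_Ioo]
    exact ((intervalIntegrable_iff_integrableOn_Ioo_of_le hx.le).1 (beta_scaled hp hq hx))

lemma posPow_conv_val {p q : ℝ} (x : ℝ) :
    ∫ t, posPow p t * posPow q (x - t)
      = (∫ t in (0:ℝ)..1, t ^ p * (1 - t) ^ q) * posPow (p + q + 1) x := by
  rcases le_or_gt x 0 with hx | hx
  · rw [posPow_mul_eq_zero hx]; simp [posPow, hx]
  · rw [posPow_mul_eq hx, MeasureTheory.integral_indicator measurableSet_Ioo, ← integral_Ioc_eq_integral_Ioo,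
      ← intervalIntegral.integral_of_le hx.le, beta_scaled_val hx]
    simp [posPow, hx]

/-- truncation -/
noncomputable def trunc (s : ℝ) (f : ℝ → ℝ) : ℝ → ℝ := (Set.Ioc 0 s).indicator f

lemma cm_continuousOn {f : ℝ → ℝ} (hf : CMinusOne f) : ContinuousOn f (Set.Ioi 0) := by
  obtain ⟨p, hp, f₁, hc, he⟩ := hf
  have : ContinuousOn (fun t : ℝ => t ^ p * f₁ t) (Set.Ioi 0) := by
    refine ContinuousOn.mul ?_ (hc.mono Set.Ioi_subset_Ici_self)
    intro t ht
    exact (Real.continuousAt_rpow_const t p (Or.inl (ne_of_gt ht))).continuousWithinAt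
  exact this.congr (fun t ht => he t ht)

lemma trunc_meas {f : ℝ → ℝ} (hf : CMinusOne f) (s : ℝ) :
    AEStronglyMeasurable (trunc s f) volume := by
  unfold trunc
  rw [aestronglyMeasurable_indicator_iff measurableSet_Ioc]
  exact ((cm_continuousOn hf).mono (fun t ht => ht.1)).aestronglyMeasurable measurableSet_Ioc

lemma cm_intervalIntegrable {f : ℝ → ℝ} (hf : CMinusOne f) {s : ℝ} (hs : 0 < s) :
    IntervalIntegrable f volume 0 s := by
  obtain ⟨p, hp, f₁, hc, he⟩ := hf
  have := (intervalIntegral.intervalIntegrable_rpow' (a := 0) (b := s) hp).mul_continuousOn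
    (g := f₁) (hc.mono (by rw [Set.uIcc_of_le hs.le]; exact Set.Icc_subset_Ici_self))
  refine this.congr ?_
  intro t ht
  rw [Set.uIoc_of_le hs.le] at ht
  exact (he t ht.1).symm

lemma trunc_integrable {f : ℝ → ℝ} (hf : CMinusOne f) (s : ℝ) :
    Integrable (trunc s f) := by
  unfold trunc
  rw [integrable_indicator_iff measurableSet_Ioc]
  rcases le_or_gt s 0 with hs | hs
  · rw [Set.Ioc_eq_empty (not_lt.2 hs)]; exact integrableOn_empty
  · exact (intervalIntegrable_iff_integrableOn_Ioc_of_le hs.le).1 (cm_intervalIntegrable hf hs)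

lemma trunc_bound {f : ℝ → ℝ} (hf : CMinusOne f) (s : ℝ) :
    ∃ p : ℝ, -1 < p ∧ ∃ C : ℝ, 0 ≤ C ∧ ∀ t, ‖trunc s f t‖ ≤ C * posPow p t := by
  obtain ⟨p, hp, f₁, hc, he⟩ := hf
  obtain ⟨C, hC⟩ := (isCompact_Icc (a := (0:ℝ)) (b := s)).exists_bound_of_continuousOn
    (hc.mono Set.Icc_subset_Ici_self)
  refine ⟨p, hp, max C 0, le_max_right _ _, fun t => ?_⟩
  by_cases ht : t ∈ Set.Ioc 0 s
  · have h0 : 0 < t := ht.1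
    simp only [trunc, Set.indicator_of_mem ht, posPow, Set.indicator_of_mem (Set.mem_Ioi.2 h0)]
    rw [he t h0, norm_mul, Real.norm_of_nonneg (Real.rpow_nonneg h0.le p), mul_comm]
    have := hC t ⟨h0.le, ht.2⟩
    have h2 := this.trans (le_max_left C 0)
    gcongr
  · rw [trunc, Set.indicator_of_notMem ht, norm_zero]
    exact mul_nonneg (le_max_right _ _) (posPow_nonneg p t)

lemma conv_int_of_bound {g h : ℝ → ℝ} {p q C D : ℝ} (hp : -1 < p) (hq : -1 < q)
    (hC : 0 ≤ C)
    (mg : AEStronglyMeasurable g volume) (mh : AEStronglyMeasurable h volume)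
    (bg : ∀ t, ‖g t‖ ≤ C * posPow p t) (bh : ∀ t, ‖h t‖ ≤ D * posPow q t) (x : ℝ) :
    Integrable (fun t => g t * h (x - t)) := by
  refine ((posPow_conv_int hp hq x).const_mul (C * D)).mono' ?_ ?_
  · exact mg.mul (mh.comp_quasiMeasurePreserving
      (quasiMeasurePreserving_sub_left_of_right_invariant volume x))
  · refine Eventually.of_forall fun t => ?_
    rw [norm_mul]
    calc ‖g t‖ * ‖h (x - t)‖ ≤ (C * posPow p t) * (D * posPow q (x - t)) :=
          mul_le_mul (bg t) (bh _) (norm_nonneg _) (mul_nonneg hC (posPow_nonneg _ _))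
      _ = _ := by ring

lemma conv_bound {g h : ℝ → ℝ} {p q C D : ℝ} (hp : -1 < p) (hq : -1 < q)
    (hC : 0 ≤ C)
    (mg : AEStronglyMeasurable g volume) (mh : AEStronglyMeasurable h volume)
    (bg : ∀ t, ‖g t‖ ≤ C * posPow p t) (bh : ∀ t, ‖h t‖ ≤ D * posPow q t) (x : ℝ) :
    ‖∫ t, g t * h (x - t)‖ ≤
      (C * D * (∫ t in (0:ℝ)..1, t ^ p * (1 - t) ^ q)) * posPow (p + q + 1) x := by
  rw [mul_assoc, ← posPow_conv_val, ← MeasureTheory.integral_const_mul]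
  refine norm_integral_le_of_norm_le ((posPow_conv_int hp hq x).const_mul (C * D)) ?_
  refine Eventually.of_forall fun t => ?_
  rw [norm_mul]
  calc ‖g t‖ * ‖h (x - t)‖ ≤ (C * posPow p t) * (D * posPow q (x - t)) :=
        mul_le_mul (bg t) (bh _) (norm_nonneg _) (mul_nonneg hC (posPow_nonneg _ _))
    _ = _ := by ring

/-- truncated convolution agrees with `lconv` -/
lemma trunc_conv {f g : ℝ → ℝ} {s x : ℝ} (h0 : 0 < x) (hx : x ≤ s) :
    ∫ t, trunc s f t * trunc s g (x - t) = lconv g f x := by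
  unfold lconv
  rw [intervalIntegral.integral_of_le h0.le, integral_Ioc_eq_integral_Ioo,
    ← MeasureTheory.integral_indicator measurableSet_Ioo]
  congr 1
  ext t
  by_cases ht : t ∈ Set.Ioo 0 x
  · obtain ⟨a, b⟩ := ht
    have m1 : t ∈ Set.Ioc 0 s := ⟨a, by linarith⟩
    have m2 : x - t ∈ Set.Ioc 0 s := ⟨by linarith, by linarith⟩
    rw [trunc, trunc, Set.indicator_of_mem m1, Set.indicator_of_mem m2,
      Set.indicator_of_mem (Set.mem_Ioo.2 ⟨a, b⟩), mul_comm]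
  · rw [Set.indicator_of_notMem ht]
    by_cases a : 0 < t
    · have m2 : x - t ∉ Set.Ioc 0 s := fun h => ht ⟨a, by linarith [h.1]⟩
      rw [trunc, trunc, Set.indicator_of_notMem m2, mul_zero]
    · have m1 : t ∉ Set.Ioc 0 s := fun h => a h.1
      rw [trunc, trunc, Set.indicator_of_notMem m1, zero_mul]

lemma lconv_comm' (f g : ℝ → ℝ) (x : ℝ) : lconv f g x = lconv g f x := by
  unfold lconv
  have := intervalIntegral.integral_comp_sub_left (a := 0) (b := x)
    (fun τ => f (x - τ) * g τ) x
  simp only [sub_sub_cancel, sub_self, sub_zero] at this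
  rw [← this]
  simp only [mul_comm]

open ContinuousLinearMap in
lemma conv_assoc_trunc {κ k f : ℝ → ℝ} (hκ : CMinusOne κ) (hk : CMinusOne k)
    (hf : CMinusOne f) (s : ℝ) :
    ∫ x, (∫ t, trunc s f t * trunc s κ (x - t)) * trunc s k (s - x)
      = ∫ x, trunc s f x * (∫ t, trunc s κ t * trunc s k (s - x - t)) := by
  obtain ⟨p, hp, A, hA, bf⟩ := trunc_bound hf s
  obtain ⟨q, hq, B, hB, bκ⟩ := trunc_bound hκ s
  obtain ⟨r, hr, C, hC, bk⟩ := trunc_bound hk s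
  have mf := trunc_meas hf s
  have mκ := trunc_meas hκ s
  have mk := trunc_meas hk s
  have bf' : ∀ t, ‖‖trunc s f t‖‖ ≤ A * posPow p t := by simpa only [norm_norm] using bf
  have bκ' : ∀ t, ‖‖trunc s κ t‖‖ ≤ B * posPow q t := by simpa only [norm_norm] using bκ
  have bk' : ∀ t, ‖‖trunc s k t‖‖ ≤ C * posPow r t := by simpa only [norm_norm] using bk
  have iκ : Integrable (fun t => ‖trunc s κ t‖) := (trunc_integrable hκ s).norm
  have ik : Integrable (fun t => ‖trunc s k t‖) := (trunc_integrable hk s).norm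
  exact convolution_assoc (mul ℝ ℝ) (mul ℝ ℝ) (mul ℝ ℝ) (mul ℝ ℝ)
    (μ := volume) (ν := volume)
    (f := trunc s f) (g := trunc s κ) (k := trunc s k)
    (fun x y z => by simp [mul_assoc]) mf mκ mk
    (Eventually.of_forall fun y => conv_int_of_bound hp hq hA mf mκ bf bκ y)
    (Eventually.of_forall fun y => conv_int_of_bound hq hr hB mκ.norm mk.norm bκ' bk' y)
    (conv_int_of_bound hp (by linarith) hA mf.norm
      (iκ.integrable_convolution (mul ℝ ℝ) ik).aestronglyMeasurable bf'
      (fun x => conv_bound hq hr hB mκ.norm mk.norm bκ' bk' x) s)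

lemma lconv_eq_integral {κ k f : ℝ → ℝ} (h : SoninPair κ k) (hf : CMinusOne f) {s : ℝ}
    (hs : 0 < s) : lconv k (lconv κ f) s = ∫ t in (0:ℝ)..s, f t := by
  obtain ⟨hκ, hk, h1⟩ := h
  have key := conv_assoc_trunc hκ hk hf s
  have L : ∫ x, (∫ t, trunc s f t * trunc s κ (x - t)) * trunc s k (s - x)
      = lconv k (lconv κ f) s := by
    rw [← trunc_conv hs le_rfl]
    apply MeasureTheory.integral_congr_ae
    filter_upwards [Measure.ae_ne volume (0:ℝ)] with x hx
    by_cases hm : x ∈ Set.Ioc 0 s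
    · rw [trunc_conv hm.1 hm.2]
      conv_rhs => rw [trunc, Set.indicator_of_mem hm]
    · have : s - x ∉ Set.Ioc 0 s := by
        rintro ⟨a, b⟩
        exact hm ⟨lt_of_le_of_ne (by linarith) (Ne.symm hx), by linarith⟩
      have e : trunc s k (s - x) = 0 := by rw [trunc, Set.indicator_of_notMem this]
      rw [e, mul_zero, mul_zero]
  have R : ∫ x, trunc s f x * (∫ t, trunc s κ t * trunc s k (s - x - t))
      = ∫ t in (0:ℝ)..s, f t := by
    rw [intervalIntegral.integral_of_le hs.le, ← MeasureTheory.integral_indicator measurableSet_Ioc]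
    apply MeasureTheory.integral_congr_ae
    filter_upwards [Measure.ae_ne volume s] with x hx
    by_cases hm : x ∈ Set.Ioc 0 s
    · have : x < s := lt_of_le_of_ne hm.2 hx
      rw [trunc_conv (by linarith) (by linarith [hm.1]), lconv_comm', h1 _ (by linarith), mul_one]
      rfl
    · rw [trunc, Set.indicator_of_notMem hm, zero_mul]
  rw [← L, key, R]

/-- First fundamental theorem of FC for the GFD of Riemann–Liouville type:
for `(κ, k) ∈ L₁` and `f ∈ C_{-1}(0,∞)`, the function `s ↦ (k * (κ * f))(s)` is
differentiable at each `t > 0` with derivative `f t`, i.e.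
`(D_{(k)} I_{(κ)} f)(t) = f(t)` for all `t > 0`. -/
theorem first_fundamental_theorem_RL (κ k f : ℝ → ℝ) (hκk : SoninPair κ k)
    (hf : CMinusOne f) :
    ∀ t > (0:ℝ), HasDerivAt (fun s => lconv k (lconv κ f) s) (f t) t := by
  intro t ht
  have hc := cm_continuousOn hf
  have hd : HasDerivAt (fun u => ∫ x in (0:ℝ)..u, f x) (f t) t :=
    intervalIntegral.integral_hasDerivAt_right (cm_intervalIntegrable hf ht)
      (hc.stronglyMeasurableAtFilter isOpen_Ioi t ht)
      (hc.continuousAt (Ioi_mem_nhds ht))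
  refine hd.congr_of_eventuallyEq ?_
  filter_upwards [Ioi_mem_nhds ht] with s hs
  exact lconv_eq_integral hκk hf hs
end

section
/- Representation of the Caputo-type general fractional derivative for differentiable functions: let k ∈ C_{-1}(0,∞) and f ∈ C¹_{-1}(0,∞). Then for every t > 0 the function k * f is differentiable at t and d/dt (k * f)(t) = (k * f′)(t) + f(0) k(t), where f(0) = lim_{s→0+} f(s); equivalently, ( *D_{(k)} f)(t) = (k * f′)(t) for all t > 0. -/
open Real Filter MeasureTheory intervalIntegral

lemma aux_beta_int {p q : ℝ} (hp : -1 < p) (hq : -1 < q) :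
    IntervalIntegrable (fun s : ℝ => s ^ p * (1 - s) ^ q) volume 0 1 := by
  have h := (Complex.betaIntegral_convergent (u := ((p + 1 : ℝ) : ℂ)) (v := ((q + 1 : ℝ) : ℂ))
    (by rw [Complex.ofReal_re]; linarith) (by rw [Complex.ofReal_re]; linarith)).norm
  rw [intervalIntegrable_iff_integrableOn_Ioo_of_le zero_le_one] at h ⊢
  refine h.congr_fun (fun s hs => ?_) measurableSet_Ioo
  have h1 : (0:ℝ) < 1 - s := by linarith [hs.2]
  have e1 : ‖(s : ℂ) ^ (((p + 1 : ℝ) : ℂ) - 1)‖ = s ^ p := by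
    rw [Complex.norm_cpow_eq_rpow_re_of_pos hs.1]; simp
  have e2 : ‖(1 - (s : ℂ)) ^ (((q + 1 : ℝ) : ℂ) - 1)‖ = (1 - s) ^ q := by
    have : (1 - (s : ℂ)) = ((1 - s : ℝ) : ℂ) := by push_cast; ring
    rw [this, Complex.norm_cpow_eq_rpow_re_of_pos h1]; simp
  simp only [norm_mul, e1, e2]

lemma CMinusOne.cont {f : ℝ → ℝ} (hf : CMinusOne f) : ∃ p : ℝ, -1 < p ∧ ∃ f₁ : ℝ → ℝ,
    Continuous f₁ ∧ ∀ t > (0:ℝ), f t = t ^ p * f₁ t := by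
  obtain ⟨p, hp, f₁, hc, h⟩ := hf
  refine ⟨p, hp, fun t => f₁ (max 0 t), ?_, fun t ht => by simp [h t ht, max_eq_right ht.le]⟩
  exact hc.comp_continuous (by fun_prop) (fun x => by simp)

lemma CMinusOne.continuousAt {f : ℝ → ℝ} (hf : CMinusOne f) {t : ℝ} (ht : 0 < t) :
    ContinuousAt f t := by
  obtain ⟨p, hp, f₁, hc, h⟩ := hf.cont
  have : ContinuousAt (fun t : ℝ => t ^ p * f₁ t) t :=
    (Real.continuousAt_rpow_const _ _ (Or.inl ht.ne')).mul hc.continuousAt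
  refine this.congr ?_
  filter_upwards [lt_mem_nhds ht] with x hx using (h x hx).symm

lemma CMinusOne.integrable {f : ℝ → ℝ} (hf : CMinusOne f) {t : ℝ} (ht : 0 < t) :
    IntervalIntegrable f volume 0 t := by
  obtain ⟨p, hp, f₁, hc, h⟩ := hf.cont
  have h2 := (intervalIntegral.intervalIntegrable_rpow' (a := 0) (b := t) hp).mul_continuousOn
    hc.continuousOn
  rw [intervalIntegrable_iff_integrableOn_Ioo_of_le ht.le] at h2 ⊢
  exact h2.congr_fun (fun s hs => (h s hs.1).symm) measurableSet_Ioo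

lemma lconv_comm'_s7 (k g : ℝ → ℝ) (x : ℝ) : lconv k g x = ∫ u in (0:ℝ)..x, k u * g (x - u) := by
  have := intervalIntegral.integral_comp_sub_left (a := 0) (b := x)
    (fun u => k u * g (x - u)) x
  simpa [lconv] using this

lemma lconv_continuousAt {k g : ℝ → ℝ} (hk : CMinusOne k) (hg : CMinusOne g) {t : ℝ}
    (ht : 0 < t) : ContinuousAt (lconv k g) t := by
  obtain ⟨p, hp, k₁, hkc, hk1⟩ := hk.cont
  obtain ⟨q, hq, g₁, hgc, hg1⟩ := hg.cont
  have key : ContinuousAt (fun x : ℝ => ∫ s in (0:ℝ)..1,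
      (s ^ p * (1 - s) ^ q) * (k₁ (x * s) * g₁ (x * (1 - s)))) t := by
    obtain ⟨A, hA⟩ := (isCompact_Icc (a := 0) (b := 2 * t)).exists_bound_of_continuousOn
      hkc.continuousOn
    obtain ⟨B, hB⟩ := (isCompact_Icc (a := 0) (b := 2 * t)).exists_bound_of_continuousOn
      hgc.continuousOn
    have hb := aux_beta_int hp hq
    refine intervalIntegral.continuousAt_of_dominated_interval
      (bound := fun s => (s ^ p * (1 - s) ^ q) * (A * B)) ?_ ?_ (hb.mul_const _) ?_
    · refine Eventually.of_forall fun x => ?_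
      have h1 := hb.aestronglyMeasurable
      rw [Set.uIoc_of_le zero_le_one]
      exact h1.mul (Continuous.aestronglyMeasurable (by fun_prop))
    · filter_upwards [lt_mem_nhds ht, gt_mem_nhds (show t < 2 * t by linarith)] with x hx hx2
      refine Eventually.of_forall fun s hs => ?_
      rw [Set.uIoc_of_le zero_le_one] at hs
      have h1 : 0 ≤ 1 - s := by linarith [hs.2]
      have h0 := hs.1.le
      rw [norm_mul, norm_mul (k₁ _), Real.norm_of_nonneg (by positivity)]
      have a1 := hA (x * s) ⟨by positivity, by nlinarith [hs.2]⟩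
      have a2 := hB (x * (1 - s)) ⟨by positivity, by nlinarith [hs.2]⟩
      have := (norm_nonneg _).trans a1
      gcongr
    · refine Eventually.of_forall fun s hs => ?_
      exact Continuous.continuousAt (by fun_prop)
  have key2 := (ContinuousAt.mul (continuousAt_id) ((Real.continuousAt_rpow_const t (p) (Or.inl ht.ne')).mul
    (Real.continuousAt_rpow_const t q (Or.inl ht.ne')))).mul key
  refine key2.congr ?_
  filter_upwards [lt_mem_nhds ht] with x hx
  rw [lconv_comm'_s7]
  have e := intervalIntegral.mul_integral_comp_mul_left (a := 0) (b := 1)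
    (f := fun u => k u * g (x - u)) x
  rw [mul_zero, mul_one] at e
  rw [← e]

  simp only [Pi.mul_apply, id]
  rw [mul_assoc, ← intervalIntegral.integral_const_mul]
  congr 1
  rw [intervalIntegral.integral_of_le zero_le_one, intervalIntegral.integral_of_le zero_le_one,
    integral_Ioc_eq_integral_Ioo, integral_Ioc_eq_integral_Ioo]
  refine setIntegral_congr_fun measurableSet_Ioo fun s hs => ?_
  have h1 : 0 < 1 - s := by linarith [hs.2]
  have e2 : x - x * s = x * (1 - s) := by ring
  simp only [e2]
  rw [hk1 _ (mul_pos hx hs.1), hg1 _ (mul_pos hx h1), Real.mul_rpow hx.le hs.1.le,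
    Real.mul_rpow hx.le h1.le]
  ring

lemma ftc_aux {f : ℝ → ℝ} {f0 : ℝ} (hdiff : ∀ t > (0:ℝ), DifferentiableAt ℝ f t)
    (hf0 : Tendsto f (nhdsWithin 0 (Set.Ioi 0)) (nhds f0))
    (hder : CMinusOne (deriv f)) {y : ℝ} (hy : 0 < y) :
    ∫ s in (0:ℝ)..y, deriv f s = f y - f0 := by
  refine intervalIntegral.integral_eq_sub_of_hasDerivAt_of_tendsto hy
    (fun x hx => (hdiff x hx.1).hasDerivAt) (hder.integrable hy) hf0 ?_
  exact (hdiff y hy).continuousAt.tendsto.mono_left nhdsWithin_le_nhds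

lemma lconv_repr (k f : ℝ → ℝ) (f0 : ℝ) (hk : CMinusOne k)
    (hdiff : ∀ t > (0:ℝ), DifferentiableAt ℝ f t)
    (hf0 : Tendsto f (nhdsWithin 0 (Set.Ioi 0)) (nhds f0))
    (hder : CMinusOne (deriv f)) {T : ℝ} (hT : 0 < T) :
    ∃ C : ℝ → ℝ, Integrable C ∧ (∀ x ∈ Set.Ioo 0 T, C x = lconv k (deriv f) x) ∧
      ∀ x ∈ Set.Ioo 0 T, lconv k f x = f0 * (∫ u in (0:ℝ)..x, k u) + ∫ s in (0:ℝ)..x, C s := by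
  set g := deriv f with hg
  set K := (Set.Ioo 0 T).indicator k with hK
  set G := (Set.Ioo 0 T).indicator g with hG
  have hKi : Integrable K := by
    rw [hK, integrable_indicator_iff measurableSet_Ioo]
    exact (intervalIntegrable_iff_integrableOn_Ioo_of_le hT.le).1 (hk.integrable hT)
  have hGi : Integrable G := by
    rw [hG, integrable_indicator_iff measurableSet_Ioo]
    exact (intervalIntegrable_iff_integrableOn_Ioo_of_le hT.le).1 (hder.integrable hT)
  have hP : Integrable (fun p : ℝ × ℝ => K p.2 * G (p.1 - p.2)) (volume.prod volume) :=
    hKi.convolution_integrand (ContinuousLinearMap.mul ℝ ℝ) hGi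
  refine ⟨fun s => ∫ u, K u * G (s - u), hP.integral_prod_left, ?_, ?_⟩
  · intro x hx
    rw [lconv_comm'_s7, intervalIntegral.integral_of_le hx.1.le, integral_Ioc_eq_integral_Ioo,
      ← MeasureTheory.integral_indicator measurableSet_Ioo]
    refine integral_congr_ae (Eventually.of_forall fun u => ?_)
    simp only [hK, hG, Set.indicator_apply, Set.mem_Ioo]
    by_cases h : 0 < u ∧ u < x
    · rw [if_pos h, if_pos ⟨h.1, h.2.trans hx.2⟩,
        if_pos ⟨by linarith [h.2], by linarith [h.1, hx.2]⟩]
    · rw [if_neg h]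
      by_cases h2 : 0 < u ∧ u < T
      · rw [if_neg (c := 0 < x - u ∧ x - u < T), mul_zero]
        rintro ⟨h3, h4⟩
        exact h ⟨h2.1, by linarith⟩
      · rw [if_neg h2, zero_mul]
  · intro x hx
    have hPx : Integrable (fun p : ℝ × ℝ => K p.2 * G (p.1 - p.2))
        ((volume.restrict (Set.Ioc 0 x)).prod volume) := by
      have := hP.integrableOn (s := Set.Ioc 0 x ×ˢ Set.univ)
      rwa [IntegrableOn, ← Measure.prod_restrict, Measure.restrict_univ] at this
    have h1 : ∀ u, ∫ s in Set.Ioc 0 x, K u * G (s - u) =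
        (Set.Ioo 0 x).indicator (fun u => k u * (f (x - u) - f0)) u := by
      intro u
      rw [MeasureTheory.integral_const_mul]
      by_cases hu : u ∈ Set.Ioo 0 x
      · rw [Set.indicator_of_mem hu, hK,
          Set.indicator_of_mem (show u ∈ Set.Ioo 0 T from ⟨hu.1, hu.2.trans hx.2⟩)]
        congr 1
        have hxu : 0 < x - u := by linarith [hu.2]
        rw [← ftc_aux hdiff hf0 hder hxu, ← intervalIntegral.integral_of_le hx.1.le,
          intervalIntegral.integral_comp_sub_right (fun v => G v) u, zero_sub,
          ← intervalIntegral.integral_add_adjacent_intervals (b := 0)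
            hGi.intervalIntegrable hGi.intervalIntegrable]
        have z : ∫ v in (-u)..0, G v = 0 := by
          rw [intervalIntegral.integral_of_le (by linarith [hu.1])]
          refine setIntegral_eq_zero_of_forall_eq_zero fun v hv => ?_
          exact Set.indicator_of_notMem (fun h => absurd h.1 (not_lt.2 hv.2)) _
        rw [z, zero_add, intervalIntegral.integral_of_le hxu.le,
          intervalIntegral.integral_of_le hxu.le]
        refine setIntegral_congr_fun measurableSet_Ioc fun v hv => ?_
        exact Set.indicator_of_mem (s := Set.Ioo 0 T)
          ⟨hv.1, by linarith [hv.2, hu.1, hx.2]⟩ _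
      · rw [Set.indicator_of_notMem hu]
        by_cases h0 : 0 < u
        · have hux : x ≤ u := by
            by_contra h
            exact hu ⟨h0, not_le.1 h⟩
          rw [setIntegral_eq_zero_of_forall_eq_zero, mul_zero]
          intro s hs
          exact Set.indicator_of_notMem (fun h => by linarith [h.1, hs.2]) _
        · rw [hK, Set.indicator_of_notMem (fun h => h0 h.1), zero_mul]
    have hint := hPx.integral_prod_right
    have swap := integral_integral_swap (f := fun s u => K u * G (s - u)) hPx
    simp only [h1] at hint swap
    rw [MeasureTheory.integral_indicator measurableSet_Ioo, ← integral_Ioc_eq_integral_Ioo,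
      ← intervalIntegral.integral_of_le hx.1.le, ← intervalIntegral.integral_of_le hx.1.le] at swap
    have hint2 : IntervalIntegrable (fun u => k u * (f (x - u) - f0)) volume 0 x := by
      rw [intervalIntegrable_iff_integrableOn_Ioo_of_le hx.1.le,
        ← integrable_indicator_iff measurableSet_Ioo]
      exact hint
    rw [swap, lconv_comm'_s7, ← intervalIntegral.integral_const_mul,
      ← intervalIntegral.integral_add ((hk.integrable hx.1).const_mul _) hint2]
    refine intervalIntegral.integral_congr fun u _ => ?_
    ring

/-- Representation of the Caputo-type GFD for differentiable functions: for
`k ∈ C_{-1}(0,∞)` and `f ∈ C¹_{-1}(0,∞)` (i.e. `f ∈ C_{-1}(0,∞)` differentiable on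
`(0,∞)` with continuous extension `f(0) = lim_{s→0+} f(s)` and `f′ ∈ C_{-1}(0,∞)`),
for every `t > 0` the function `k * f` is differentiable at `t` with
`d/dt (k * f)(t) = (k * f′)(t) + f(0) k(t)`; equivalently
`( *D_{(k)} f)(t) = (k * f′)(t)` for all `t > 0`. -/
theorem caputo_GFD_representation (k f : ℝ → ℝ) (f0 : ℝ) (hk : CMinusOne k)
    (hf : CMinusOne f) (hdiff : ∀ t > (0:ℝ), DifferentiableAt ℝ f t)
    (hf0 : Tendsto f (nhdsWithin 0 (Set.Ioi 0)) (nhds f0))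
    (hder : CMinusOne (deriv f)) :
    ∀ t > (0:ℝ), HasDerivAt (lconv k f) (lconv k (deriv f) t + f0 * k t) t := by
  intro t ht
  obtain ⟨C, hCi, hC, hrep⟩ := lconv_repr k f f0 hk hdiff hf0 hder (T := 2 * t) (by linarith)
  have htm : Set.Ioo 0 (2 * t) ∈ nhds t := Ioo_mem_nhds ht (by linarith)
  have hCt : ContinuousAt C t := by
    refine (lconv_continuousAt hk hder ht).congr ?_
    filter_upwards [htm] with x hx using (hC x hx).symm
  have d1 : HasDerivAt (fun x => ∫ s in (0:ℝ)..x, C s) (C t) t :=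
    intervalIntegral.integral_hasDerivAt_right hCi.intervalIntegrable
      (hCi.aestronglyMeasurable.stronglyMeasurableAtFilter) hCt
  have d2 : HasDerivAt (fun x => ∫ s in (0:ℝ)..x, k s) (k t) t := by
    refine intervalIntegral.integral_hasDerivAt_right (hk.integrable ht) ?_ (hk.continuousAt ht)
    refine ⟨Set.Ioo 0 (2 * t), htm, ?_⟩
    exact ((intervalIntegrable_iff_integrableOn_Ioo_of_le (by linarith)).1
      (hk.integrable (t := 2 * t) (by linarith))).aestronglyMeasurable
  have d := (d2.const_mul f0).add d1
  rw [hC t (mem_of_mem_nhds htm), add_comm (f0 * k t)] at d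
  refine d.congr_of_eventuallyEq ?_
  filter_upwards [htm] with x hx using hrep x hx
end
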